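/- In the MM-SPIR model (with all constraints), conditioning on an undesired message set does not decrease the conditional entropy of any individual answer: for every database index n ∈ {1,…,N} and any two size-P subsets 𝒫1 ≠ 𝒫2 of {1,…,K}, H(A_n^{[𝒫2]} | W_{𝒫1}, Q_n^{[𝒫2]}) = H(A_n^{[𝒫2]} | Q_n^{[𝒫2]}); equivalently, I(W_{𝒫1}; A_n^{[𝒫2]} | Q_n^{[𝒫2]}) = 0. -/

import Mathlib

open Finset

namespace MMSPIR

variable {Ω : Type} [Fintype Ω]

/-- Probability that the random variable `X` takes the value `v`,
under the weight function `p` on the finite sample space `Ω`. -/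
noncomputable def prob (p : Ω → ℝ) {V : Type} [DecidableEq V] (X : Ω → V) (v : V) : ℝ :=
  ∑ ω ∈ Finset.univ.filter (fun ω => X ω = v), p ω

/-- Shannon entropy of `X`, with logarithm taken to base `q`. -/
noncomputable def ent (q : ℕ) (p : Ω → ℝ) {V : Type} [Fintype V] [DecidableEq V]
    (X : Ω → V) : ℝ :=
  -∑ v : V, prob p X v * Real.logb q (prob p X v)

/-- Conditional entropy `H(X | Y)`, base `q`. -/
noncomputable def cent (q : ℕ) (p : Ω → ℝ) {V W : Type} [Fintype V] [DecidableEq V]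
    [Fintype W] [DecidableEq W] (X : Ω → V) (Y : Ω → W) : ℝ :=
  ent q p (fun ω => (X ω, Y ω)) - ent q p Y

/-- Mutual information `I(X ; Y)`, base `q`. -/
noncomputable def mi (q : ℕ) (p : Ω → ℝ) {V W : Type} [Fintype V] [DecidableEq V]
    [Fintype W] [DecidableEq W] (X : Ω → V) (Y : Ω → W) : ℝ :=
  ent q p X + ent q p Y - ent q p (fun ω => (X ω, Y ω))

/-- Conditional mutual information `I(X ; Y | Z)`, base `q`. -/
noncomputable def cmi (q : ℕ) (p : Ω → ℝ) {U V W : Type} [Fintype U] [DecidableEq U]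
    [Fintype V] [DecidableEq V] [Fintype W] [DecidableEq W]
    (X : Ω → U) (Y : Ω → V) (Z : Ω → W) : ℝ :=
  cent q p X Z + cent q p Y Z - cent q p (fun ω => (X ω, Y ω)) Z

/-- `X` and `Y` have the same distribution. -/
def IdentDist (p : Ω → ℝ) {V : Type} [DecidableEq V] (X Y : Ω → V) : Prop :=
  ∀ v, prob p X v = prob p Y v

/-!
If a demand set `𝒫` misses the message `k`, database privacy makes the messages outside `𝒫`
independent of everything the user sees, and reliability lets one adjoin `W_𝒫` to what the user
sees. As the messages are independent of each other, `W_k` is then independent of all the other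
messages together with the answer and query of a single database. User privacy transports this to
any other demand set, so it holds for every `k` with the same answer and query. Adding the messages
one at a time, every tuple of messages is independent of that answer and query.
-/

section Prob

variable {p : Ω → ℝ} {U V W : Type} [DecidableEq U] [DecidableEq V] [DecidableEq W]

theorem prob_nonneg (hp : ∀ ω, 0 ≤ p ω) (X : Ω → V) (v : V) : 0 ≤ prob p X v :=
  sum_nonneg fun _ _ => hp _

theorem prob_apply_pos (hp : ∀ ω, 0 ≤ p ω) (X : Ω → V) {ω : Ω} (hω : 0 < p ω) :
    0 < prob p X (X ω) :=
  hω.trans_le (single_le_sum (f := p) (fun _ _ => hp _) (mem_filter.2 ⟨mem_univ ω, rfl⟩))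

theorem prob_apply_le_of_factorsThrough (hp : ∀ ω, 0 ≤ p ω) {X : Ω → U} {Y : Ω → V}
    (h : Y.FactorsThrough X) (ω : Ω) : prob p X (X ω) ≤ prob p Y (Y ω) :=
  sum_le_sum_of_subset_of_nonneg (monotone_filter_right _ fun _ _ h' => h h') fun _ _ _ => hp _

theorem sum_prob_mul [Fintype V] (p : Ω → ℝ) (X : Ω → V) (f : V → ℝ) :
    ∑ v, prob p X v * f v = ∑ ω, p ω * f (X ω) := by
  rw [← sum_fiberwise univ X]
  refine sum_congr rfl fun v _ => ?_
  rw [prob, sum_mul]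
  exact sum_congr rfl fun ω hω => by rw [(mem_filter.1 hω).2]

theorem sum_prob [Fintype V] (p : Ω → ℝ) (X : Ω → V) : ∑ v, prob p X v = ∑ ω, p ω := by
  simpa using sum_prob_mul p X 1

theorem sum_prob_prodMk [Fintype U] (p : Ω → ℝ) (X : Ω → U) (Z : Ω → W) (z : W) :
    ∑ x, prob p (fun ω => (X ω, Z ω)) (x, z) = prob p Z z := by
  simp only [prob, Prod.mk.injEq]
  rw [← sum_fiberwise (univ.filter fun ω => Z ω = z) X]
  simp only [filter_filter, and_comm]

theorem prob_comp (p : Ω → ℝ) {X : Ω → V} {s : Finset V} (hs : ∀ ω, X ω ∈ s) (g : V → W)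
    (w : W) : prob p (fun ω => g (X ω)) w = ∑ v ∈ s with g v = w, prob p X v := by
  rw [prob, ← sum_fiberwise_of_maps_to (g := X) (t := s.filter fun v => g v = w) fun ω hω =>
    mem_filter.2 ⟨hs ω, (mem_filter.1 hω).2⟩]
  refine sum_congr rfl fun v hv => ?_
  rw [prob, filter_filter]
  refine sum_congr (filter_congr fun ω _ => and_iff_right_of_imp ?_) fun _ _ => rfl
  rintro rfl
  exact (mem_filter.1 hv).2

theorem IdentDist.comp {X Y : Ω → V} (h : IdentDist p X Y) (g : V → W) :
    IdentDist p (fun ω => g (X ω)) (fun ω => g (Y ω)) := fun w => by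
  rw [prob_comp p (s := univ.image X ∪ univ.image Y) (by simp),
    prob_comp p (s := univ.image X ∪ univ.image Y) (by simp)]
  exact sum_congr rfl fun v _ => h v

end Prob

section Entropy

variable {q : ℕ} {p : Ω → ℝ} {U V W V' : Type} [Fintype U] [DecidableEq U] [Fintype V]
  [DecidableEq V] [Fintype W] [DecidableEq W] [Fintype V'] [DecidableEq V']

theorem ent_eq_neg_sum (q : ℕ) (p : Ω → ℝ) (X : Ω → V) :
    ent q p X = -∑ ω, p ω * Real.logb q (prob p X (X ω)) := by
  rw [ent, sum_prob_mul p X fun v => Real.logb q (prob p X v)]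

theorem ent_congr (q : ℕ) (p : Ω → ℝ) {X : Ω → U} {Y : Ω → V}
    (h : ∀ ω ω', X ω = X ω' ↔ Y ω = Y ω') : ent q p X = ent q p Y := by
  simp only [ent_eq_neg_sum, prob, h]

theorem IdentDist.ent_eq {X Y : Ω → V} (h : IdentDist p X Y) (q : ℕ) :
    ent q p X = ent q p Y := by
  simp only [ent, h _]

theorem IdentDist.mi_comp_eq {T : Type} [DecidableEq T] {X Y : Ω → T} (h : IdentDist p X Y)
    (q : ℕ) (f : T → U) (g : T → V) :
    mi q p (fun ω => f (X ω)) (fun ω => g (X ω)) =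
      mi q p (fun ω => f (Y ω)) (fun ω => g (Y ω)) := by
  rw [mi, mi, (h.comp f).ent_eq, (h.comp g).ent_eq, (h.comp fun t => (f t, g t)).ent_eq]

theorem ent_of_subsingleton (q : ℕ) (hp1 : ∑ ω, p ω = 1) [Subsingleton V] (X : Ω → V) :
    ent q p X = 0 := by
  have hprob (ω : Ω) : prob p X (X ω) = 1 := by
    rw [prob, filter_true_of_mem fun _ _ => Subsingleton.elim _ _, hp1]
  simp [ent_eq_neg_sum, hprob]

theorem ent_le_of_factorsThrough (hq : 1 < q) (hp : ∀ ω, 0 ≤ p ω) {X : Ω → U} {Y : Ω → V}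
    (h : Y.FactorsThrough X) : ent q p Y ≤ ent q p X := by
  rw [ent_eq_neg_sum, ent_eq_neg_sum, neg_le_neg_iff]
  refine sum_le_sum fun ω _ => ?_
  rcases (hp ω).eq_or_lt with hω | hω
  · simp [← hω]
  · exact mul_le_mul_of_nonneg_left (Real.logb_le_logb_of_le (mod_cast hq)
      (prob_apply_pos hp X hω) (prob_apply_le_of_factorsThrough hp h ω)) hω.le

theorem ent_le_neg_sum_mul_logb (hq : 1 < q) (hp : ∀ ω, 0 ≤ p ω) (X : Ω → V) {r : V → ℝ}
    (hr : ∀ v, 0 ≤ r v) (hpos : ∀ ω, 0 < p ω → 0 < r (X ω)) (hsum : ∑ v, r v ≤ ∑ ω, p ω) :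
    ent q p X ≤ -∑ ω, p ω * Real.logb q (r (X ω)) := by
  have hratio : ∑ ω, p ω * (r (X ω) / prob p X (X ω)) ≤ ∑ ω, p ω := by
    rw [← sum_prob_mul p X fun v => r v / prob p X v]
    refine (sum_le_sum fun v _ => ?_).trans hsum
    rw [mul_div_left_comm]
    exact mul_le_of_le_one_right (hr v) (div_self_le_one _)
  have hlog (ω : Ω) : p ω * Real.log (r (X ω)) - p ω * Real.log (prob p X (X ω)) ≤
      p ω * (r (X ω) / prob p X (X ω)) - p ω := by
    rcases (hp ω).eq_or_lt with hω | hω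
    · simp [← hω]
    · have hX := prob_apply_pos hp X hω
      rw [← mul_sub, ← Real.log_div (hpos ω hω).ne' hX.ne', ← mul_sub_one]
      exact mul_le_mul_of_nonneg_left
        (Real.log_le_sub_one_of_pos (div_pos (hpos ω hω) hX)) hω.le
  have hsum_log := sum_le_sum fun ω (_ : ω ∈ univ) => hlog ω
  simp only [sum_sub_distrib] at hsum_log
  rw [ent_eq_neg_sum, neg_le_neg_iff]
  simp only [Real.logb, ← mul_div_assoc, ← sum_div]
  exact div_le_div_of_nonneg_right (by linarith) (Real.log_nonneg (mod_cast hq.le))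

theorem cmi_nonneg (hq : 1 < q) (hp : ∀ ω, 0 ≤ p ω) (X : Ω → U) (Y : Ω → V) (Z : Ω → W) :
    0 ≤ cmi q p X Y Z := by
  -- Gibbs' inequality against the law making `X` and `Y` conditionally independent given `Z`.
  let r : (U × V) × W → ℝ := fun t => prob p (fun ω => (X ω, Z ω)) (t.1.1, t.2) *
    prob p (fun ω => (Y ω, Z ω)) (t.1.2, t.2) / prob p Z t.2
  have hr_sum : ∑ t, r t = ∑ ω, p ω := by
    simp only [r, Fintype.sum_prod_type_right, ← sum_div, ← mul_sum, ← sum_mul, sum_prob_prodMk,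
      mul_self_div_self, sum_prob]
  have hr_log (ω : Ω) : p ω * Real.logb q (r ((X ω, Y ω), Z ω)) =
      p ω * Real.logb q (prob p (fun ω => (X ω, Z ω)) (X ω, Z ω)) +
      p ω * Real.logb q (prob p (fun ω => (Y ω, Z ω)) (Y ω, Z ω)) -
      p ω * Real.logb q (prob p Z (Z ω)) := by
    rcases (hp ω).eq_or_lt with hω | hω
    · simp [← hω]
    · have hXZ := prob_apply_pos hp (fun ω => (X ω, Z ω)) hω
      have hYZ := prob_apply_pos hp (fun ω => (Y ω, Z ω)) hω
      have hZ := prob_apply_pos hp Z hω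
      rw [Real.logb_div (mul_pos hXZ hYZ).ne' hZ.ne', Real.logb_mul hXZ.ne' hYZ.ne']
      ring
  have gibbs := ent_le_neg_sum_mul_logb hq hp (fun ω => ((X ω, Y ω), Z ω)) (r := r)
    (fun t => div_nonneg (mul_nonneg (prob_nonneg hp _ _) (prob_nonneg hp _ _))
      (prob_nonneg hp _ _))
    (fun ω hω => div_pos (mul_pos (prob_apply_pos hp (fun ω => (X ω, Z ω)) hω)
      (prob_apply_pos hp (fun ω => (Y ω, Z ω)) hω)) (prob_apply_pos hp Z hω)) hr_sum.le
  simp only [hr_log, sum_add_distrib, sum_sub_distrib] at gibbs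
  simp only [cmi, cent, ent_eq_neg_sum q p fun ω => (X ω, Z ω),
    ent_eq_neg_sum q p fun ω => (Y ω, Z ω), ent_eq_neg_sum q p Z]
  linarith

theorem cent_nonneg (hq : 1 < q) (hp : ∀ ω, 0 ≤ p ω) (X : Ω → U) (Y : Ω → V) :
    0 ≤ cent q p X Y :=
  sub_nonneg.2 (ent_le_of_factorsThrough hq hp fun _ _ h => congrArg Prod.snd h)

theorem cent_le_of_factorsThrough (hq : 1 < q) (hp : ∀ ω, 0 ≤ p ω) (X : Ω → U) {Y : Ω → V}
    {Y' : Ω → V'} (h : Y'.FactorsThrough Y) : cent q p X Y ≤ cent q p X Y' := by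
  have hcmi := cmi_nonneg hq hp X Y Y'
  have hYY' : ent q p (fun ω => (Y ω, Y' ω)) = ent q p Y :=
    ent_congr q p fun _ _ => by simpa using @h _ _
  have hXYY' : ent q p (fun ω => ((X ω, Y ω), Y' ω)) = ent q p (fun ω => (X ω, Y ω)) :=
    ent_congr q p fun _ _ => by simpa using fun _ h' => h h'
  simp only [cmi, cent, hYY', hXYY'] at hcmi ⊢
  linarith

theorem mi_eq_ent_sub_cent (q : ℕ) (p : Ω → ℝ) (X : Ω → U) (Y : Ω → V) :
    mi q p X Y = ent q p X - cent q p X Y := by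
  rw [mi, cent]
  ring

theorem mi_comm (q : ℕ) (p : Ω → ℝ) (X : Ω → U) (Y : Ω → V) : mi q p X Y = mi q p Y X := by
  rw [mi, mi, add_comm (ent q p X), ent_congr q p (X := fun ω => (X ω, Y ω))
    (Y := fun ω => (Y ω, X ω)) fun _ _ => by simp [and_comm]]

theorem mi_nonneg (hq : 1 < q) (hp : ∀ ω, 0 ≤ p ω) (hp1 : ∑ ω, p ω = 1) (X : Ω → U)
    (Y : Ω → V) : 0 ≤ mi q p X Y := by
  have hcent := cent_le_of_factorsThrough hq hp X (Y := Y) (Y' := fun _ => ()) fun _ _ _ => rfl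
  have hX : cent q p X (fun _ => ()) = ent q p X := by
    rw [cent, ent_of_subsingleton q hp1 fun _ => (), sub_zero]
    exact ent_congr q p fun _ _ => by simp
  rw [mi_eq_ent_sub_cent]
  linarith

theorem mi_le_of_factorsThrough (hq : 1 < q) (hp : ∀ ω, 0 ≤ p ω) (X : Ω → U) {Y : Ω → V}
    {Y' : Ω → V'} (h : Y'.FactorsThrough Y) : mi q p X Y' ≤ mi q p X Y := by
  rw [mi_eq_ent_sub_cent, mi_eq_ent_sub_cent]
  exact sub_le_sub_left (cent_le_of_factorsThrough hq hp X h) _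

theorem mi_eq_zero_of_factorsThrough {U' : Type} [Fintype U'] [DecidableEq U'] (hq : 1 < q)
    (hp : ∀ ω, 0 ≤ p ω) (hp1 : ∑ ω, p ω = 1) {X : Ω → U} {X' : Ω → U'} {Y : Ω → V}
    {Y' : Ω → V'} (h : mi q p X Y = 0) (hX : X'.FactorsThrough X) (hY : Y'.FactorsThrough Y) :
    mi q p X' Y' = 0 := by
  refine le_antisymm ?_ (mi_nonneg hq hp hp1 X' Y')
  calc mi q p X' Y' ≤ mi q p X' Y := mi_le_of_factorsThrough hq hp X' hY
    _ = mi q p Y X' := mi_comm ..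
    _ ≤ mi q p Y X := mi_le_of_factorsThrough hq hp Y hX
    _ = 0 := by rw [mi_comm, h]

theorem ent_prodMk_le (hq : 1 < q) (hp : ∀ ω, 0 ≤ p ω) (hp1 : ∑ ω, p ω = 1) (X : Ω → U)
    (Y : Ω → V) : ent q p (fun ω => (X ω, Y ω)) ≤ ent q p X + ent q p Y :=
  sub_nonneg.1 (mi_nonneg hq hp hp1 X Y)

theorem mi_prodMk_eq_zero_of_cent_eq_zero (hq : 1 < q) (hp : ∀ ω, 0 ≤ p ω)
    (hp1 : ∑ ω, p ω = 1) {X : Ω → U} {Y : Ω → V} {Z : Ω → W} (h : mi q p X Y = 0)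
    (hZ : cent q p Z Y = 0) : mi q p X (fun ω => (Z ω, Y ω)) = 0 := by
  refine le_antisymm ?_ (mi_nonneg hq hp hp1 _ _)
  have hXY : ent q p (fun ω => (X ω, Y ω)) ≤ ent q p (fun ω => (X ω, (Z ω, Y ω))) :=
    ent_le_of_factorsThrough hq hp fun _ _ h => by simp_all
  rw [cent] at hZ
  rw [mi] at h ⊢
  linarith

theorem mi_prodMk_right_eq_zero (hq : 1 < q) (hp : ∀ ω, 0 ≤ p ω) (hp1 : ∑ ω, p ω = 1)
    {X : Ω → U} {Y : Ω → V} {Z : Ω → W} (hXY : mi q p X Y = 0)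
    (hXYZ : mi q p (fun ω => (X ω, Y ω)) Z = 0) : mi q p X (fun ω => (Y ω, Z ω)) = 0 := by
  refine le_antisymm ?_ (mi_nonneg hq hp hp1 _ _)
  have hYZ := ent_prodMk_le hq hp hp1 Y Z
  have hassoc : ent q p (fun ω => ((X ω, Y ω), Z ω)) = ent q p (fun ω => (X ω, (Y ω, Z ω))) :=
    ent_congr q p fun _ _ => by simp [and_assoc]
  rw [mi] at hXY hXYZ ⊢
  linarith

theorem mi_prodMk_left_eq_zero (hq : 1 < q) (hp : ∀ ω, 0 ≤ p ω) (hp1 : ∑ ω, p ω = 1)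
    {X : Ω → U} {Y : Ω → V} {Z : Ω → W} (hYZ : mi q p Y Z = 0)
    (hXYZ : mi q p X (fun ω => (Y ω, Z ω)) = 0) : mi q p (fun ω => (X ω, Y ω)) Z = 0 := by
  rw [mi_comm] at hYZ hXYZ ⊢
  have hZYX := mi_prodMk_right_eq_zero hq hp hp1 (X := Z) (Y := Y) (Z := X) hYZ <|
    mi_eq_zero_of_factorsThrough hq hp hp1 hXYZ (fun _ _ h => by simp_all) fun _ _ => id
  exact mi_eq_zero_of_factorsThrough hq hp hp1 hZYX (fun _ _ => id) fun _ _ h => by simp_all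

theorem cmi_eq_cent_sub_cent (q : ℕ) (p : Ω → ℝ) (X : Ω → U) (Y : Ω → V) (Z : Ω → W) :
    cmi q p X Y Z = cent q p Y Z - cent q p Y (fun ω => (X ω, Z ω)) := by
  have hYXZ : ent q p (fun ω => ((X ω, Y ω), Z ω)) = ent q p (fun ω => (Y ω, (X ω, Z ω))) :=
    ent_congr q p fun _ _ => by simp only [Prod.mk.injEq]; tauto
  rw [cmi, cent, cent, cent, cent, hYXZ]
  ring

theorem mi_prodMk_eq_mi_add_cmi (q : ℕ) (p : Ω → ℝ) (X : Ω → U) (Y : Ω → V) (Z : Ω → W) :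
    mi q p X (fun ω => (Y ω, Z ω)) = mi q p X Z + cmi q p X Y Z := by
  have hassoc : ent q p (fun ω => ((X ω, Y ω), Z ω)) = ent q p (fun ω => (X ω, (Y ω, Z ω))) :=
    ent_congr q p fun _ _ => by simp [and_assoc]
  rw [mi, mi, cmi, cent, cent, cent, hassoc]
  ring

theorem cmi_eq_zero_of_mi_eq_zero (hq : 1 < q) (hp : ∀ ω, 0 ≤ p ω) (hp1 : ∑ ω, p ω = 1)
    {X : Ω → U} {Y : Ω → V} {Z : Ω → W} (h : mi q p X (fun ω => (Y ω, Z ω)) = 0) :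
    cmi q p X Y Z = 0 := by
  have hXZ := mi_nonneg hq hp hp1 X Z
  have hcmi := cmi_nonneg hq hp X Y Z
  rw [mi_prodMk_eq_mi_add_cmi] at h
  linarith

end Entropy

theorem exists_card_eq_notMem {α : Type*} [Fintype α] {m : ℕ}
    (hm : m < Fintype.card α) (a : α) : ∃ s : Finset α, s.card = m ∧ a ∉ s := by
  classical
  obtain ⟨s, hs, hcard⟩ := exists_subset_card_eq (s := {a}ᶜ) (n := m)
    (by rw [card_compl, card_singleton]; lia)
  exact ⟨s, hcard, fun ha => by simpa using hs ha⟩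

section Messages

variable {α ι M : Type} {W : ι → α → M} {a a' : α}

/-- The tuple `W_T = (W_k)_{k ∈ T}` of the messages indexed by `T`, as one random variable. -/
def messages (W : ι → α → M) (T : Finset ι) : α → {k // k ∈ T} → M := fun a k => W k.1 a

theorem messages_apply_eq_iff {T : Finset ι} :
    messages W T a = messages W T a' ↔ ∀ k ∈ T, W k a = W k a' := by
  simp only [messages, funext_iff, Subtype.forall]

theorem messages_insert_apply_eq_iff [DecidableEq ι] {T : Finset ι} {k : ι} :
    messages W (insert k T) a = messages W (insert k T) a' ↔
      (W k a, messages W T a) = (W k a', messages W T a') := by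
  simp only [Prod.mk.injEq, messages_apply_eq_iff, forall_mem_insert]

theorem messages_factorsThrough {T T' : Finset ι} (h : T ⊆ T') :
    (messages W T).FactorsThrough (messages W T') := fun _ _ h' =>
  messages_apply_eq_iff.2 fun k hk => messages_apply_eq_iff.1 h' k (h hk)

end Messages

section MessageIndependence

variable {ι M V : Type} [DecidableEq ι] [Fintype M] [DecidableEq M] [Fintype V] [DecidableEq V]
  {q : ℕ} {p : Ω → ℝ} {W : ι → Ω → M}

theorem ent_messages_le_sum (hq : 1 < q) (hp : ∀ ω, 0 ≤ p ω) (hp1 : ∑ ω, p ω = 1)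
    (W : ι → Ω → M) (T : Finset ι) : ent q p (messages W T) ≤ ∑ k ∈ T, ent q p (W k) := by
  induction T using Finset.induction_on with
  | empty => exact (ent_of_subsingleton q hp1 _).le
  | insert k T hk ih =>
    calc ent q p (messages W (insert k T))
        = ent q p (fun ω => (W k ω, messages W T ω)) :=
          ent_congr q p fun _ _ => messages_insert_apply_eq_iff
      _ ≤ ent q p (W k) + ent q p (messages W T) := ent_prodMk_le hq hp hp1 _ _
      _ ≤ ∑ j ∈ insert k T, ent q p (W j) := by rw [sum_insert hk]; gcongr

theorem mi_messages_eq_zero_of_forall [Fintype ι] (hq : 1 < q) (hp : ∀ ω, 0 ≤ p ω)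
    (hp1 : ∑ ω, p ω = 1) {Y : Ω → V}
    (h : ∀ k, mi q p (W k) (fun ω => (messages W {k}ᶜ ω, Y ω)) = 0) (T : Finset ι) :
    mi q p (messages W T) Y = 0 := by
  induction T using Finset.induction_on with
  | empty =>
    refine le_antisymm ?_ (mi_nonneg hq hp hp1 _ _)
    rw [mi_eq_ent_sub_cent, ent_of_subsingleton q hp1, zero_sub]
    exact neg_nonpos.2 (cent_nonneg hq hp _ _)
  | insert k T hk ih =>
    have hk_T : mi q p (W k) (fun ω => (messages W T ω, Y ω)) = 0 :=
      mi_eq_zero_of_factorsThrough hq hp hp1 (h k) (fun _ _ => id) fun _ _ h => by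
        rw [Prod.mk.injEq] at h ⊢
        exact h.imp_left fun h => messages_factorsThrough (by simpa using hk) h
    exact mi_eq_zero_of_factorsThrough hq hp hp1 (mi_prodMk_left_eq_zero hq hp hp1 ih hk_T)
      (fun _ _ h => messages_insert_apply_eq_iff.2 h) fun _ _ => id

variable [Fintype ι]

theorem mi_message_messages_compl_eq_zero (hq : 1 < q) (hp : ∀ ω, 0 ≤ p ω)
    (hp1 : ∑ ω, p ω = 1) (hW : ent q p (fun ω k => W k ω) = ∑ k, ent q p (W k)) (k : ι) :
    mi q p (W k) (messages W {k}ᶜ) = 0 := by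
  refine le_antisymm ?_ (mi_nonneg hq hp hp1 _ _)
  have hall : ent q p (fun ω => (W k ω, messages W {k}ᶜ ω)) = ent q p (fun ω k => W k ω) :=
    ent_congr q p fun ω ω' => by
      rw [← messages_insert_apply_eq_iff, messages_apply_eq_iff, funext_iff]
      simp
  have hothers := ent_messages_le_sum hq hp hp1 W {k}ᶜ
  rw [← sum_compl_add_sum {k}, sum_singleton] at hW
  rw [mi, hall, hW]
  linarith

theorem mi_message_eq_zero_of_notMem (hq : 1 < q) (hp : ∀ ω, 0 ≤ p ω) (hp1 : ∑ ω, p ω = 1)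
    (hW : ent q p (fun ω k => W k ω) = ∑ k, ent q p (W k)) {Y : Ω → V} {T : Finset ι} {k : ι}
    (hk : k ∉ T) (hpriv : mi q p (messages W Tᶜ) Y = 0) (hrel : cent q p (messages W T) Y = 0) :
    mi q p (W k) (fun ω => (messages W {k}ᶜ ω, Y ω)) = 0 := by
  have hTc : mi q p (messages W Tᶜ) (fun ω => (messages W T ω, Y ω)) = 0 :=
    mi_prodMk_eq_zero_of_cent_eq_zero hq hp hp1 hpriv hrel
  have hpair : mi q p (fun ω => (W k ω, messages W (Tᶜ.erase k) ω))
      (fun ω => (messages W T ω, Y ω)) = 0 :=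
    mi_eq_zero_of_factorsThrough hq hp hp1 hTc
      (fun _ _ h => by
        rwa [← messages_insert_apply_eq_iff, insert_erase (mem_compl.2 hk)])
      fun _ _ => id
  have hindep : mi q p (W k) (messages W (Tᶜ.erase k)) = 0 :=
    mi_eq_zero_of_factorsThrough hq hp hp1 (mi_message_messages_compl_eq_zero hq hp hp1 hW k)
      (fun _ _ => id) (messages_factorsThrough (by simp))
  refine mi_eq_zero_of_factorsThrough hq hp hp1
    (mi_prodMk_right_eq_zero hq hp hp1 hindep hpair) (fun _ _ => id) fun _ _ h => ?_
  simp only [Prod.mk.injEq, messages_apply_eq_iff, mem_erase, mem_compl, mem_singleton] at h ⊢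
  exact ⟨fun j hj => (em (j ∈ T)).elim (h.2.1 j) fun hjT => h.1 j ⟨hj, hjT⟩, h.2.2⟩

end MessageIndependence

section Retrieval

variable {ι κ M QT AT FT : Type} [Fintype ι] [DecidableEq ι] [Fintype κ] [DecidableEq κ]
  [Fintype M] [DecidableEq M] [Fintype QT] [DecidableEq QT] [Fintype AT] [DecidableEq AT]
  [Fintype FT] [DecidableEq FT] {q : ℕ} {p : Ω → ℝ} {W : ι → Ω → M} {F : Ω → FT}

theorem mi_message_answer_query_eq_zero (hq : 1 < q) (hp : ∀ ω, 0 ≤ p ω) (hp1 : ∑ ω, p ω = 1)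
    (hW : ent q p (fun ω k => W k ω) = ∑ k, ent q p (W k)) {Q : κ → Ω → QT} {A : κ → Ω → AT}
    {𝒫₀ : Finset ι} (hrel : cent q p (messages W 𝒫₀) (fun ω => ((fun n => A n ω), F ω)) = 0)
    (hdpriv : mi q p (messages W 𝒫₀ᶜ)
      (fun ω => ((fun n => Q n ω), (fun n => A n ω), F ω)) = 0)
    {k : ι} (hk : k ∉ 𝒫₀) (n : κ) :
    mi q p (W k) (fun ω => (messages W {k}ᶜ ω, A n ω, Q n ω)) = 0 := by
  have hdecode : cent q p (messages W 𝒫₀)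
      (fun ω => ((fun n => Q n ω), (fun n => A n ω), F ω)) = 0 :=
    le_antisymm
      (hrel ▸ cent_le_of_factorsThrough hq hp _ fun _ _ h => congrArg Prod.snd h)
      (cent_nonneg hq hp _ _)
  refine mi_eq_zero_of_factorsThrough hq hp hp1
    (mi_message_eq_zero_of_notMem hq hp hp1 hW hk hdpriv hdecode) (fun _ _ => id)
    fun _ _ h => ?_
  simp only [Prod.mk.injEq] at h ⊢
  exact ⟨h.1, congrFun h.2.2.1 n, congrFun h.2.1 n⟩

theorem conditioning_on_undesired_message_set_general {Q : Finset ι → κ → Ω → QT}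
    {A : Finset ι → κ → Ω → AT} {𝒟 : Set (Finset ι)} (hq : 1 < q) (hp : ∀ ω, 0 ≤ p ω)
    (hp1 : ∑ ω, p ω = 1) (hW : ent q p (fun ω k => W k ω) = ∑ k, ent q p (W k))
    (h𝒟 : ∀ k, ∃ 𝒫₀ ∈ 𝒟, k ∉ 𝒫₀)
    (hrel : ∀ 𝒫₀ ∈ 𝒟, cent q p (messages W 𝒫₀) (fun ω => ((fun n => A 𝒫₀ n ω), F ω)) = 0)
    (hupriv : ∀ n, ∀ 𝒫₀ ∈ 𝒟, ∀ 𝒫₁ ∈ 𝒟, IdentDist p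
      (fun ω => (Q 𝒫₀ n ω, A 𝒫₀ n ω, fun k => W k ω))
      (fun ω => (Q 𝒫₁ n ω, A 𝒫₁ n ω, fun k => W k ω)))
    (hdpriv : ∀ 𝒫₀ ∈ 𝒟, mi q p (messages W 𝒫₀ᶜ)
      (fun ω => ((fun n => Q 𝒫₀ n ω), (fun n => A 𝒫₀ n ω), F ω)) = 0)
    (n : κ) {𝒫₀ : Finset ι} (h𝒫₀ : 𝒫₀ ∈ 𝒟) (T : Finset ι) :
    cent q p (A 𝒫₀ n) (fun ω => (messages W T ω, Q 𝒫₀ n ω)) = cent q p (A 𝒫₀ n) (Q 𝒫₀ n) ∧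
      cmi q p (messages W T) (A 𝒫₀ n) (Q 𝒫₀ n) = 0 := by
  have hmessage (k : ι) :
      mi q p (W k) (fun ω => (messages W {k}ᶜ ω, A 𝒫₀ n ω, Q 𝒫₀ n ω)) = 0 := by
    obtain ⟨𝒫₁, h𝒫₁, hk⟩ := h𝒟 k
    rw [← mi_message_answer_query_eq_zero hq hp hp1 hW (hrel 𝒫₁ h𝒫₁) (hdpriv 𝒫₁ h𝒫₁) hk n]
    exact (hupriv n 𝒫₀ h𝒫₀ 𝒫₁ h𝒫₁).mi_comp_eq q (fun t => t.2.2 k)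
      fun t => (messages (fun j (w : ι → M) => w j) {k}ᶜ t.2.2, t.2.1, t.1)
  have hcmi : cmi q p (messages W T) (A 𝒫₀ n) (Q 𝒫₀ n) = 0 :=
    cmi_eq_zero_of_mi_eq_zero hq hp hp1 (mi_messages_eq_zero_of_forall hq hp hp1 hmessage T)
  exact ⟨(sub_eq_zero.1 ((cmi_eq_cent_sub_cent ..).symm.trans hcmi)).symm, hcmi⟩

end Retrieval

theorem conditioning_on_undesired_message_set
    {Ω MT QT AT FT ST : Type}
    [Fintype Ω] [Fintype MT] [DecidableEq MT] [Fintype QT] [DecidableEq QT]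
    [Fintype AT] [DecidableEq AT] [Fintype FT] [DecidableEq FT]
    [Fintype ST] [DecidableEq ST]
    (N K P L q : ℕ) (hN : 2 ≤ N) (hK : 2 ≤ K) (hP1 : 1 ≤ P) (hP2 : P ≤ K - 1)
    (hL : 1 ≤ L) (hq : IsPrimePow q)
    (p : Ω → ℝ) (hp0 : ∀ ω, 0 ≤ p ω) (hp1 : (∑ ω, p ω) = 1)
    (W : Fin K → Ω → MT) (F : Ω → FT) (S : Ω → ST)
    (Q : Finset (Fin K) → Fin N → Ω → QT)
    (A : Finset (Fin K) → Fin N → Ω → AT)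
    (hWk : ∀ k, ent q p (W k) = (L : ℝ))
    (hWall : ent q p (fun ω (k : Fin K) => W k ω) = (K : ℝ) * L)
    (hind : ent q p (fun ω => (F ω, S ω, fun k : Fin K => W k ω)) =
      ent q p F + ent q p S + ent q p (fun ω (k : Fin K) => W k ω))
    (hQdet : ∀ 𝒫₀ : Finset (Fin K), 𝒫₀.card = P →
      cent q p (fun ω (n : Fin N) => Q 𝒫₀ n ω) F = 0)
    (hAdet : ∀ 𝒫₀ : Finset (Fin K), 𝒫₀.card = P → ∀ n : Fin N,
      cent q p (A 𝒫₀ n) (fun ω => (Q 𝒫₀ n ω, (fun k : Fin K => W k ω), S ω)) = 0)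
    (hrel : ∀ 𝒫₀ : Finset (Fin K), 𝒫₀.card = P →
      cent q p (fun ω (k : {x : Fin K // x ∈ 𝒫₀}) => W k.1 ω)
        (fun ω => ((fun n : Fin N => A 𝒫₀ n ω), F ω)) = 0)
    (hupriv : ∀ (n : Fin N) (𝒫₁ 𝒫₂ : Finset (Fin K)), 𝒫₁.card = P → 𝒫₂.card = P →
      IdentDist p
        (fun ω => (Q 𝒫₁ n ω, A 𝒫₁ n ω, (fun k : Fin K => W k ω), S ω))
        (fun ω => (Q 𝒫₂ n ω, A 𝒫₂ n ω, (fun k : Fin K => W k ω), S ω)))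
    (hdpriv : ∀ 𝒫₀ : Finset (Fin K), 𝒫₀.card = P →
      mi q p (fun ω (k : {x : Fin K // x ∈ 𝒫₀ᶜ}) => W k.1 ω)
        (fun ω => ((fun n : Fin N => Q 𝒫₀ n ω), (fun n : Fin N => A 𝒫₀ n ω), F ω)) = 0)
    : ∀ (n : Fin N) (𝒫₁ 𝒫₂ : Finset (Fin K)), 𝒫₁.card = P → 𝒫₂.card = P → 𝒫₁ ≠ 𝒫₂ →
      (cent q p (A 𝒫₂ n)
        (fun ω => ((fun k : {x : Fin K // x ∈ 𝒫₁} => W k.1 ω), Q 𝒫₂ n ω)) =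
       cent q p (A 𝒫₂ n) (Q 𝒫₂ n)) ∧
      cmi q p (fun ω (k : {x : Fin K // x ∈ 𝒫₁}) => W k.1 ω) (A 𝒫₂ n) (Q 𝒫₂ n) = 0 := by
  intro n 𝒫₁ 𝒫₂ _ h𝒫₂ _
  exact conditioning_on_undesired_message_set_general (𝒟 := {𝒫₀ | 𝒫₀.card = P}) hq.one_lt hp0 hp1
    (by simp [hWall, hWk]) (exists_card_eq_notMem (by rw [Fintype.card_fin]; lia)) hrel
    (fun n _ h₁ _ h₂ => (hupriv n _ _ h₁ h₂).comp fun t => (t.1, t.2.1, t.2.2.1))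
    hdpriv n h𝒫₂ 𝒫₁

end MMSPIR
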